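/- Let I ⊆ ℝ be an open interval, u : I → ℝ continuously differentiable, λ ∈ ℝ with λ ≠ 0, and let z : I → ℝ be twice continuously differentiable satisfying the second-order Riccati chain equation z″ + 3z·z′ + z³ + 6u·z + 3u′ − λ = 0 on I. Suppose w := z′ + z²/2 + 3u is nowhere zero on I and set y := λ/w (the contact transformation). Then y is nowhere zero on I, w satisfies w′ = λ − 2z·w, y satisfies y′ = 2z·y − y², and y solves on I the Gambier equation of class G25: y″ − (3/(4y))·(y′)² + (3/2)·y·y′ + y³/4 + 6u·y − 2λ = 0. -/

import Mathlib

/-!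
The Riccati chain equation is exactly the statement that `w = z' + z²/2 + 3u` satisfies the
linear equation `w' = λ - 2zw`; the substitution `y = λ/w` turns this into `y' = 2zy - y²`.
Differentiating once more gives `y'' = 2z'y + (2z - 2y) y'`. After inserting `y' = y (2z - y)`
in the left-hand side of G25, the terms in `y²` and `y³` cancel and there remains
`2y (z' + z²/2 + 3u) - 2λ = 2yw - 2λ = 0`.
-/

/-- The function `w := z' + z²/2 + 3u` of the contact transformation relating the
second-order Riccati chain equation to the Gambier equation G25. -/
noncomputable def G25w (u z : ℝ → ℝ) : ℝ → ℝ :=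
  fun x => deriv z x + z x ^ 2 / 2 + 3 * u x

/-- The contact transformation `y := λ/w = λ/(z' + z²/2 + 3u)`. -/
noncomputable def G25y (lam : ℝ) (u z : ℝ → ℝ) : ℝ → ℝ :=
  fun x => lam / G25w u z x

/-- If `z` solves the second-order Riccati chain equation
`z'' + 3zz' + z³ + 6uz + 3u' - λ = 0` on an open interval `I`, with `u` of class `C¹`,
`λ ≠ 0`, and `w := z' + z²/2 + 3u` nowhere zero on `I`, then `y := λ/w` is nowhere zero,
`w' = λ - 2zw`, `y' = 2zy - y²`, and `y` solves the Gambier equation G25: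
`y'' - (3/(4y))(y')² + (3/2)yy' + y³/4 + 6uy - 2λ = 0` on `I`. -/
theorem riccati_chain_contact_to_G25
    (I : Set ℝ) (hI : IsOpen I) (hI' : I.OrdConnected)
    (u : ℝ → ℝ) (hu : ContDiffOn ℝ 1 u I)
    (lam : ℝ) (hlam : lam ≠ 0)
    (z : ℝ → ℝ) (hz : ContDiffOn ℝ 2 z I)
    (hODE : ∀ x ∈ I,
      deriv (deriv z) x + 3 * z x * deriv z x + z x ^ 3
        + 6 * u x * z x + 3 * deriv u x - lam = 0)
    (hw : ∀ x ∈ I, G25w u z x ≠ 0) :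
    (∀ x ∈ I, G25y lam u z x ≠ 0) ∧
    (∀ x ∈ I, HasDerivAt (G25w u z) (lam - 2 * z x * G25w u z x) x) ∧
    (∀ x ∈ I, HasDerivAt (G25y lam u z)
      (2 * z x * G25y lam u z x - G25y lam u z x ^ 2) x) ∧
    (∀ x ∈ I,
      deriv (deriv (G25y lam u z)) x
        - 3 / (4 * G25y lam u z x) * (deriv (G25y lam u z) x) ^ 2
        + 3 / 2 * G25y lam u z x * deriv (G25y lam u z) x
        + G25y lam u z x ^ 3 / 4
        + 6 * u x * G25y lam u z x - 2 * lam = 0) := by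
  have hnhds : ∀ x ∈ I, I ∈ nhds x := fun x hx => hI.mem_nhds hx
  have hzd : ∀ x ∈ I, HasDerivAt z (deriv z x) x := fun x hx =>
    ((hz.differentiableOn (by norm_num)).differentiableAt (hnhds x hx)).hasDerivAt
  have hz' : ∀ x ∈ I, HasDerivAt (deriv z) (deriv (deriv z) x) x := by
    intro x hx
    have h1 : ContDiffOn ℝ 1 (deriv z) I :=
      ((contDiffOn_succ_iff_deriv_of_isOpen (n := 1) hI).1
        (by simpa [one_add_one_eq_two] using hz)).2.2
    exact ((h1.differentiableOn (by norm_num)).differentiableAt (hnhds x hx)).hasDerivAt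
  have hud : ∀ x ∈ I, HasDerivAt u (deriv u x) x := fun x hx =>
    ((hu.differentiableOn (by norm_num)).differentiableAt (hnhds x hx)).hasDerivAt
  have hy0 : ∀ x ∈ I, G25y lam u z x ≠ 0 := fun x hx => div_ne_zero hlam (hw x hx)
  have hwd : ∀ x ∈ I, HasDerivAt (G25w u z) (lam - 2 * z x * G25w u z x) x := by
    intro x hx
    have h := ((hz' x hx).add (((hzd x hx).pow 2).div_const 2)).add ((hud x hx).const_mul 3)
    refine h.congr_deriv ?_
    simp only [G25w]
    linear_combination hODE x hx
  have hyd : ∀ x ∈ I, HasDerivAt (G25y lam u z)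
      (2 * z x * G25y lam u z x - G25y lam u z x ^ 2) x := by
    intro x hx
    have hwx := hw x hx
    refine ((hasDerivAt_const x lam).div (hwd x hx) hwx).congr_deriv ?_
    simp only [G25y]
    field_simp
    ring
  refine ⟨hy0, hwd, hyd, fun x hx => ?_⟩
  -- The first-order relation holds near `x` because `I` is open, so it may be differentiated.
  have hev : deriv (G25y lam u z) =ᶠ[nhds x]
      fun t => 2 * z t * G25y lam u z t - G25y lam u z t ^ 2 := by
    filter_upwards [hnhds x hx] with t ht using (hyd t ht).deriv
  have hy2 := (((hzd x hx).const_mul 2).mul (hyd x hx)).sub ((hyd x hx).pow 2)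
  have hyw : G25y lam u z x * (deriv z x + z x ^ 2 / 2 + 3 * u x) = lam :=
    div_mul_cancel₀ lam (hw x hx)
  have hyx := hy0 x hx
  have hdd : deriv (deriv (G25y lam u z)) x = 2 * deriv z x * G25y lam u z x
      + (2 * z x - 2 * G25y lam u z x)
        * (2 * z x * G25y lam u z x - G25y lam u z x ^ 2) := by
    rw [hev.deriv_eq]
    refine (hy2.congr_deriv ?_).deriv
    ring
  -- Since `y' = y (2z - y)`, the quotient `(y')² / y` is the polynomial `y (2z - y)²`.
  have hq : 3 / (4 * G25y lam u z x)
      * (2 * z x * G25y lam u z x - G25y lam u z x ^ 2) ^ 2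
      = 3 / 4 * G25y lam u z x * (2 * z x - G25y lam u z x) ^ 2 := by
    field_simp
  rw [hdd, (hyd x hx).deriv, hq]
  linear_combination 2 * hyw
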